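/- Let d ∈ ℕ and let (X_i)_{i∈ℕ} be a strictly stationary sequence of S_d-valued random vectors with marginal density f on S_d, strong mixing coefficient α(m) ≪ m^{−ν} for some ν > 1, and fix s ∈ Int(S_d) and b = b(n) → 0. Let (p_n), (q_n) be positive integer sequences diverging to ∞, k_n = ⌊n/(p_n+q_n)⌋, and for j ∈ {1,…,k_n} let V_j(s) = Σ_{i ∈ J_j} Ξ_{i,n}(s), where J_j = {(j−1)(p_n+q_n)+p_n+1, …, j(p_n+q_n)} is the j-th small block and Ξ_{i,n}(s) = κ_{s,b}(X_i) − E{κ_{s,b}(X_i)}. If p_n/(p_n+q_n) → 1, then Σ_{1 ≤ i < j ≤ k_n} |E{V_i(s) V_j(s)}| ≪_s k_n (q_n b^{−d/2})² / (p_n + q_n)^ν as n → ∞. -/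

import Mathlib

open MeasureTheory Filter Asymptotics Real Topology

noncomputable section

/-- The `d`-dimensional simplex `S_d = {s ∈ [0,1]^d : ‖s‖₁ ≤ 1}`. -/
def Sd (d : ℕ) : Set (Fin d → ℝ) :=
  {s | (∀ i, s i ∈ Set.Icc (0 : ℝ) 1) ∧ ∑ i, |s i| ≤ 1}

/-- The interior of the simplex, `Int(S_d) = {s ∈ (0,1)^d : ‖s‖₁ < 1}`. -/
def SdInt (d : ℕ) : Set (Fin d → ℝ) :=
  {s | (∀ i, s i ∈ Set.Ioo (0 : ℝ) 1) ∧ ∑ i, |s i| < 1}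

/-- The Dirichlet(u, v) density on the simplex, evaluated at `x`. -/
def dirK (d : ℕ) (u : Fin d → ℝ) (v : ℝ) (x : Fin d → ℝ) : ℝ :=
  (Real.Gamma (∑ i, u i + v) / (Real.Gamma v * ∏ i, Real.Gamma (u i))) *
    (1 - ∑ i, x i) ^ (v - 1) * ∏ i, (x i) ^ (u i - 1)

/-- The Dirichlet kernel `κ_{s,b} = K_{s/b+1, (1-‖s‖₁)/b+1}`. -/
def kappa (d : ℕ) (s : Fin d → ℝ) (b : ℝ) (x : Fin d → ℝ) : ℝ :=
  dirK d (fun i => s i / b + 1) ((1 - ∑ i, s i) / b + 1) x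

/-- `ψ(s) = (4π)^{-d/2} / ((1-‖s‖₁)^{1/2} ∏ s_i^{1/2})`. -/
def psiFun (d : ℕ) (s : Fin d → ℝ) : ℝ :=
  (4 * π) ^ (-(d : ℝ) / 2) /
    ((1 - ∑ i, s i) ^ ((1 : ℝ) / 2) * ∏ i, (s i) ^ ((1 : ℝ) / 2))

/-- The Dirichlet kernel density estimator `f̂_{n,b}(s)`. -/
def fhat {Ω : Type*} (d n : ℕ) (b : ℝ) (X : ℕ → Ω → (Fin d → ℝ))
    (s : Fin d → ℝ) (ω : Ω) : ℝ :=
  (n : ℝ)⁻¹ * ∑ i ∈ Finset.Icc 1 n, kappa d s b (X i ω)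

/-- The strong mixing (α-mixing) coefficient of the sequence `X`. -/
def alphaMix {Ω : Type*} [MeasurableSpace Ω] (P : Measure Ω)
    {d : ℕ} (X : ℕ → Ω → (Fin d → ℝ)) (m : ℕ) : ℝ :=
  sSup {r : ℝ | ∃ k : ℕ, 1 ≤ k ∧ ∃ A B : Set Ω,
    MeasurableSet[⨆ i ∈ Set.Icc 1 k, MeasurableSpace.comap (X i) inferInstance] A ∧
    MeasurableSet[⨆ i ∈ Set.Ici (k + m), MeasurableSpace.comap (X i) inferInstance] B ∧
    r = |(P (A ∩ B)).toReal - (P A).toReal * (P B).toReal|}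

/-- Strict stationarity of the sequence `X` (indexed from 1). -/
def IsStrictlyStationary {Ω : Type*} [MeasurableSpace Ω] (P : Measure Ω)
    {d : ℕ} (X : ℕ → Ω → (Fin d → ℝ)) : Prop :=
  ∀ k n : ℕ,
    Measure.map (fun ω => fun t : Fin n => X (t.1 + 1 + k) ω) P =
      Measure.map (fun ω => fun t : Fin n => X (t.1 + 1) ω) P

/-- Covariance of two real random variables. -/
def cov {Ω : Type*} [MeasurableSpace Ω] (P : Measure Ω) (Y Z : Ω → ℝ) : ℝ :=
  ∫ ω, Y ω * Z ω ∂P - (∫ ω, Y ω ∂P) * (∫ ω, Z ω ∂P)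

/-- The bias functional `g(s)` from Theorem MSE. -/
def gfun (d : ℕ) (f : (Fin d → ℝ) → ℝ) (s : Fin d → ℝ) : ℝ :=
  (∑ i, (1 - ((d : ℝ) + 1) * s i) * fderiv ℝ f s (Pi.single i 1)) +
    (1 / 2) * ∑ i, ∑ j, s i * ((if i = j then (1 : ℝ) else 0) - s j) *
      fderiv ℝ (fun t => fderiv ℝ f t (Pi.single i 1)) s (Pi.single j 1)

/-- The centered kernel variable `Ξ_{i,n}(s)`. -/
def Xi {Ω : Type*} [MeasurableSpace Ω] (P : Measure Ω) {d : ℕ}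
    (X : ℕ → Ω → (Fin d → ℝ)) (s : Fin d → ℝ) (b : ℝ) (i : ℕ) (ω : Ω) : ℝ :=
  kappa d s b (X i ω) - ∫ ω', kappa d s b (X i ω') ∂P

/-- The `j`-th big block of indices `I_j`. -/
def bigBlock (pn qn j : ℕ) : Finset ℕ :=
  Finset.Icc ((j - 1) * (pn + qn) + 1) ((j - 1) * (pn + qn) + pn)

/-- The `j`-th small block of indices `J_j`. -/
def smallBlock (pn qn j : ℕ) : Finset ℕ :=
  Finset.Icc ((j - 1) * (pn + qn) + pn + 1) (j * (pn + qn))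

/-- Assumption (A2): pairwise joint densities exist and the local dependence
functions `h_{i,j} = f_{X_i,X_j} - f_{X_i} f_{X_j}` have uniformly bounded `L^p` norms. -/
def AssumpA2 {Ω : Type*} [MeasurableSpace Ω] (P : Measure Ω) {d : ℕ}
    (X : ℕ → Ω → (Fin d → ℝ)) (f : (Fin d → ℝ) → ℝ) (p : ℝ) : Prop :=
  ∃ fpair : ℕ → ℕ → ((Fin d → ℝ) × (Fin d → ℝ)) → ℝ,
    (∀ i j : ℕ, 1 ≤ i → 1 ≤ j → i ≠ j →
      Measure.map (fun ω => (X i ω, X j ω)) P =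
        volume.withDensity (fun z => ENNReal.ofReal (fpair i j z))) ∧
    (∀ i j : ℕ, 1 ≤ i → 1 ≤ j → i ≠ j →
      Integrable (fun z => |fpair i j z - f z.1 * f z.2| ^ p)
        (volume.restrict (Sd d ×ˢ Sd d))) ∧
    ∃ C : ℝ, ∀ i j : ℕ, 1 ≤ i → 1 ≤ j → i ≠ j →
      (∫ z in Sd d ×ˢ Sd d, |fpair i j z - f z.1 * f z.2| ^ p) ^ (1 / p) ≤ C

/-- Stirling ratio `R(z) = √(2π) e^{-z} z^{z+1/2} / Γ(z+1)`. -/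
def Rfun (z : ℝ) : ℝ :=
  Real.sqrt (2 * π) * Real.exp (-z) * z ^ (z + 1 / 2) / Real.Gamma (z + 1)

end

open scoped ProbabilityTheory
open ProbabilityTheory (covariance covariance_eq_sub)

/-! Since `Ξ` is centered, `E[V_i V_j]` is the covariance of `∑ κ(X_l)` over two small blocks. These
sums take values in `[0, q sup κ]` and depend on indices at least `(j - i) p` apart, so the
layer-cake representation of both bounds their covariance by `(q sup κ)² α((j - i) p)`.

Let `t` and `z` be the barycentric coordinates of `x` and `s`, scaled by `1 / b`. Then the Dirichlet
kernel is `Γ(1 / b + d + 1) b ^ (1 / b) ∏ t_i ^ z_i / Γ(z_i + 1)`. Stirling's bounds give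
`t ^ z / Γ(z + 1) ≤ e ^ (t + 1 / 2) / √z` uniformly in `t`, and hence `sup κ ≪ b ^ (-d / 2)`.

Finally `∑ (j - i) ^ (-ν)` over `i` is bounded because `ν > 1`, and `p ^ (-ν) ≪ (p + q) ^ (-ν)`
because `q ≪ p`. -/

section GammaBounds

theorem sub_sq_div_two_le_log_one_add {u : ℝ} (hu : 0 ≤ u) : u - u ^ 2 / 2 ≤ log (1 + u) := by
  refine le_trans ?_ (le_log_one_add_of_nonneg hu)
  rw [le_div_iff₀ (by positivity)]
  nlinarith [pow_nonneg hu 3]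

theorem log_add_le_log_add_div {x c : ℝ} (hx : 0 < x) (hc : 0 ≤ c) :
    log (x + c) ≤ log x + c / x := by
  have h := log_le_sub_one_of_pos (show 0 < (x + c) / x by positivity)
  rw [log_div (by positivity) hx.ne', add_div, div_self hx.ne'] at h
  linarith

theorem log_factorial_le_stirling {n : ℕ} (hn : n ≠ 0) :
    log (n.factorial : ℝ) ≤ (n + 1 / 2) * log n - n + 1 := by
  obtain ⟨m, rfl⟩ := Nat.exists_eq_succ_of_ne_zero hn
  have h := Stirling.log_stirlingSeq'_antitone (Nat.zero_le m)
  have hm : ((m.succ : ℕ) : ℝ) ≠ 0 := by positivity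
  rw [Function.comp_apply, Function.comp_apply, Function.comp_apply, Function.comp_apply,
    Stirling.log_stirlingSeq_formula, Stirling.stirlingSeq_one, log_div (exp_ne_zero 1) (by simp),
    log_exp, log_sqrt zero_le_two, log_mul two_ne_zero hm, log_div hm (exp_ne_zero 1), log_exp] at h
  linarith

theorem log_Gamma_add_le {s t : ℝ} (hs : 0 < s) (ht : t ∈ Set.Icc 0 1) :
    log (Gamma (s + t)) ≤ log (Gamma s) + t * log s := by
  have hconvex := convexOn_log_Gamma.2 (Set.mem_Ioi.2 hs) (Set.mem_Ioi.2 (hs.trans (lt_add_one s)))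
    (sub_nonneg.2 ht.2) ht.1 (sub_add_cancel 1 t)
  simp only [smul_eq_mul, Function.comp_apply, Gamma_add_one hs.ne',
    log_mul hs.ne' (Gamma_pos_of_pos hs).ne'] at hconvex
  rw [show (1 - t) * s + t * (s + 1) = s + t by ring] at hconvex
  linarith

theorem log_Gamma_le_stirling {y : ℝ} (hy : 1 ≤ y) :
    log (Gamma y) ≤ (y - 1 / 2) * log y - y + 2 := by
  have hfloor : ⌊y⌋₊ ≠ 0 := (Nat.floor_pos.2 hy).ne'
  have hn : (0 : ℝ) < ⌊y⌋₊ := by exact_mod_cast Nat.floor_pos.2 hy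
  have hle : (⌊y⌋₊ : ℝ) ≤ y := Nat.floor_le (zero_le_one.trans hy)
  have hlt : y < ⌊y⌋₊ + 1 := Nat.lt_floor_add_one y
  have hinterp := log_Gamma_add_le (t := y - ⌊y⌋₊) hn ⟨by linarith, by linarith⟩
  have hfactorial : log (Gamma ⌊y⌋₊) + log ⌊y⌋₊ = log (⌊y⌋₊.factorial : ℝ) := by
    rw [← Gamma_nat_eq_factorial, Gamma_add_one hn.ne',
      log_mul hn.ne' (Gamma_pos_of_pos hn).ne', add_comm]
  have hlog : (y - 1 / 2) * log ⌊y⌋₊ ≤ (y - 1 / 2) * log y :=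
    mul_le_mul_of_nonneg_left (log_le_log hn hle) (by linarith)
  rw [add_sub_cancel] at hinterp
  linarith [log_factorial_le_stirling hfloor]

theorem Gamma_add_le_exp_mul_rpow {x c : ℝ} (hx : 0 < x) (hc : 0 ≤ c) (hxc : 1 ≤ x + c) :
    Gamma (x + c) ≤ exp (2 - x + c ^ 2 / x) * x ^ (x + c - 1 / 2) := by
  rw [rpow_def_of_pos hx, ← exp_add, ← log_le_iff_le_exp (Gamma_pos_of_pos (by linarith))]
  have hlog : (x + c - 1 / 2) * log (x + c) ≤ (x + c - 1 / 2) * (log x + c / x) :=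
    mul_le_mul_of_nonneg_left (log_add_le_log_add_div hx hc) (by linarith)
  have hcross : (x + c - 1 / 2) * (c / x) = c + c ^ 2 / x - c / x / 2 := by
    field_simp
  have hdiv : 0 ≤ c / x := by positivity
  linarith [log_Gamma_le_stirling hxc]

theorem exp_stirling_le_exp_neg_mul_rpow {z r : ℝ} (hz : 0 < z) (hr : 0 ≤ r) (hrz : r ^ 2 ≤ z) :
    exp (z * log z - z - 1 / 2) ≤ exp (-(z + r)) * (z + r) ^ z := by
  have hlog : log (z + r) = log z + log (1 + r / z) := by
    rw [← log_mul hz.ne' (by positivity)]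
    congr 1
    field_simp
  have htaylor : r - 1 / 2 ≤ z * log (1 + r / z) :=
    calc r - 1 / 2 ≤ z * (r / z - (r / z) ^ 2 / 2) := by
          rw [show z * (r / z - (r / z) ^ 2 / 2) = r - r ^ 2 / z / 2 by field_simp]
          linarith [(div_le_one hz).2 hrz]
      _ ≤ z * log (1 + r / z) :=
          mul_le_mul_of_nonneg_left (sub_sq_div_two_le_log_one_add (by positivity)) hz.le
  rw [rpow_def_of_pos (by positivity), ← exp_add, exp_le_exp, hlog]
  linarith

-- Laplace's method: the integrand of `Γ(z + 1)` peaks at `z` and on `[z, z + √z]` it stays within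
-- a factor `e^{-1/2}` of its maximum.
theorem exp_stirling_mul_sqrt_le_Gamma_add_one {z : ℝ} (hz : 0 < z) :
    exp (z * log z - z - 1 / 2) * √z ≤ Gamma (z + 1) := by
  have hpeak : ∀ t ∈ Set.Ioc z (z + √z),
      exp (z * log z - z - 1 / 2) ≤ exp (-t) * t ^ (z + 1 - 1) := by
    intro t ⟨hzt, htz⟩
    have hsq : (t - z) ^ 2 ≤ z := (le_sqrt (by linarith) hz.le).1 (by linarith)
    simpa using exp_stirling_le_exp_neg_mul_rpow hz (sub_nonneg.2 hzt.le) hsq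
  have hint := GammaIntegral_convergent (s := z + 1) (by positivity)
  have hsub : Set.Ioc z (z + √z) ⊆ Set.Ioi 0 := fun t ht => hz.trans ht.1
  have hnonneg : 0 ≤ᵐ[volume.restrict (Set.Ioi 0)] fun t : ℝ => exp (-t) * t ^ (z + 1 - 1) :=
    (ae_restrict_mem measurableSet_Ioi).mono fun t ht =>
      mul_nonneg (exp_pos _).le (rpow_nonneg (le_of_lt ht) _)
  calc exp (z * log z - z - 1 / 2) * √z
      = exp (z * log z - z - 1 / 2) * volume.real (Set.Ioc z (z + √z)) := by
        rw [volume_real_Ioc_of_le (by simp), add_sub_cancel_left]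
    _ ≤ ∫ t in Set.Ioc z (z + √z), exp (-t) * t ^ (z + 1 - 1) :=
        setIntegral_ge_of_const_le_real measurableSet_Ioc (by simp) hpeak (hint.mono_set hsub)
    _ ≤ ∫ t in Set.Ioi 0, exp (-t) * t ^ (z + 1 - 1) :=
        setIntegral_mono_set hint hnonneg hsub.eventuallyLE
    _ = Gamma (z + 1) := (Gamma_eq_integral (by positivity)).symm

theorem rpow_le_exp_sub_mul_rpow_self {z t : ℝ} (hz : 0 < z) (ht : 0 ≤ t) :
    t ^ z ≤ exp (z * log z + (t - z)) := by
  have hle : t / z ≤ exp (t / z - 1) := by linarith [add_one_le_exp (t / z - 1)]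
  calc t ^ z = z ^ z * (t / z) ^ z := by
        rw [← mul_rpow hz.le (by positivity), mul_div_cancel₀ _ hz.ne']
    _ ≤ z ^ z * exp (t / z - 1) ^ z := by gcongr
    _ = exp (z * log z + (t - z)) := by
        rw [rpow_def_of_pos hz, ← exp_mul, ← exp_add, sub_mul, div_mul_cancel₀ _ hz.ne', one_mul,
          mul_comm z]

theorem rpow_div_Gamma_add_one_nonneg {z t : ℝ} (hz : 0 ≤ z) (ht : 0 ≤ t) :
    0 ≤ t ^ z / Gamma (z + 1) :=
  div_nonneg (rpow_nonneg ht z) (Gamma_nonneg_of_nonneg (by positivity))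

theorem rpow_div_Gamma_add_one_le {z t : ℝ} (hz : 0 < z) (ht : 0 ≤ t) :
    t ^ z / Gamma (z + 1) ≤ exp (t + 1 / 2) / √z := by
  rw [div_le_div_iff₀ (Gamma_pos_of_pos (by positivity)) (by positivity)]
  calc t ^ z * √z ≤ exp (z * log z + (t - z)) * √z := by
        gcongr
        exact rpow_le_exp_sub_mul_rpow_self hz ht
    _ = exp (t + 1 / 2) * (exp (z * log z - z - 1 / 2) * √z) := by
        rw [← mul_assoc, ← exp_add]
        ring_nf
    _ ≤ exp (t + 1 / 2) * Gamma (z + 1) := by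
        gcongr
        exact exp_stirling_mul_sqrt_le_Gamma_add_one hz

theorem prod_rpow_div_Gamma_le {ι : Type*} [Fintype ι] {N : ℝ} (hN : 0 < N) {a x : ι → ℝ}
    (ha : a ∈ stdSimplex ℝ ι) (ha_pos : ∀ i, 0 < a i) (hx : x ∈ stdSimplex ℝ ι) :
    ∏ i, x i ^ (N * a i) / Gamma (N * a i + 1) ≤
      exp (N + Fintype.card ι / 2) * (∏ i, 1 / √(a i)) *
        N ^ (-(N + Fintype.card ι / 2 : ℝ)) := by
  have hscale : ∏ i, N ^ (N * a i) = N ^ N := by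
    rw [← rpow_sum_of_pos hN, ← Finset.mul_sum, ha.2, mul_one]
  have hexp : ∏ i, exp (N * x i + 1 / 2) = exp (N + Fintype.card ι / 2) := by
    rw [← exp_sum, Finset.sum_add_distrib, ← Finset.mul_sum, hx.2]
    simp [div_eq_mul_inv]
  have hsqrt : ∏ i, √(N * a i) = N ^ (Fintype.card ι / 2 : ℝ) * ∏ i, √(a i) := by
    simp only [sqrt_mul hN.le, Finset.prod_mul_distrib, Finset.prod_const, Finset.card_univ]
    rw [sqrt_eq_rpow, ← rpow_mul_natCast hN.le]
    ring_nf
  have hfactor : ∀ i, x i ^ (N * a i) / Gamma (N * a i + 1) ≤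
      exp (N * x i + 1 / 2) / √(N * a i) / N ^ (N * a i) := by
    intro i
    rw [le_div_iff₀ (rpow_pos_of_pos hN _), div_mul_eq_mul_div, mul_comm (x i ^ _),
      ← mul_rpow hN.le (hx.1 i)]
    exact rpow_div_Gamma_add_one_le (mul_pos hN (ha_pos i)) (mul_nonneg hN.le (hx.1 i))
  calc ∏ i, x i ^ (N * a i) / Gamma (N * a i + 1)
      ≤ ∏ i, exp (N * x i + 1 / 2) / √(N * a i) / N ^ (N * a i) :=
        Finset.prod_le_prod (fun i _ => rpow_div_Gamma_add_one_nonneg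
          (mul_nonneg hN.le (ha.1 i)) (hx.1 i)) fun i _ => hfactor i
    _ = _ := by
        rw [Finset.prod_div_distrib, Finset.prod_div_distrib, hscale, hexp, hsqrt, neg_add,
          rpow_add hN, rpow_neg hN.le, rpow_neg hN.le, Finset.prod_div_distrib,
          Finset.prod_const_one]
        field_simp

theorem Gamma_mul_prod_rpow_div_Gamma_le {ι : Type*} [Fintype ι] [Nonempty ι] {N : ℝ}
    (hN : 0 < N) {a x : ι → ℝ} (ha : a ∈ stdSimplex ℝ ι) (ha_pos : ∀ i, 0 < a i)
    (hx : x ∈ stdSimplex ℝ ι) :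
    Gamma (N + Fintype.card ι) * ∏ i, x i ^ (N * a i) / Gamma (N * a i + 1) ≤
      exp (2 + Fintype.card ι / 2 + Fintype.card ι ^ 2 / N) * (∏ i, 1 / √(a i)) *
        N ^ ((Fintype.card ι - 1) / 2 : ℝ) := by
  have hcard : (1 : ℝ) ≤ Fintype.card ι := by exact_mod_cast Fintype.card_pos (α := ι)
  calc Gamma (N + Fintype.card ι) * ∏ i, x i ^ (N * a i) / Gamma (N * a i + 1)
      ≤ (exp (2 - N + Fintype.card ι ^ 2 / N) * N ^ (N + Fintype.card ι - 1 / 2 : ℝ)) *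
        (exp (N + Fintype.card ι / 2) * (∏ i, 1 / √(a i)) *
          N ^ (-(N + Fintype.card ι / 2 : ℝ))) :=
        mul_le_mul (Gamma_add_le_exp_mul_rpow hN (by positivity) (by linarith))
          (prod_rpow_div_Gamma_le hN ha ha_pos hx)
          (Finset.prod_nonneg fun i _ => rpow_div_Gamma_add_one_nonneg
            (mul_nonneg hN.le (ha.1 i)) (hx.1 i)) (by positivity)
    _ = exp ((2 - N + Fintype.card ι ^ 2 / N) + (N + Fintype.card ι / 2)) * (∏ i, 1 / √(a i)) *
        N ^ ((N + Fintype.card ι - 1 / 2 : ℝ) + -(N + Fintype.card ι / 2 : ℝ)) := by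
        rw [exp_add (2 - N + _), rpow_add hN (N + _ - _)]
        ring
    _ = _ := by
        ring_nf

end GammaBounds

section DirichletKernel

/-- The barycentric coordinates `(1 - ‖s‖₁, s₁, …, s_d)` of a point `s` of the simplex `S_d`. They
put the defect `1 - ‖s‖₁` on the same footing as the other coordinates, so that the Dirichlet kernel
becomes a single product over `Fin (d + 1)`. -/
def barycentric {d : ℕ} (s : Fin d → ℝ) : Fin (d + 1) → ℝ :=
  Fin.cons (1 - ∑ i, s i) s

theorem barycentric_mem_stdSimplex {d : ℕ} {s : Fin d → ℝ} (hs : s ∈ Sd d) :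
    barycentric s ∈ stdSimplex ℝ (Fin (d + 1)) := by
  have hsum : ∑ i, s i ≤ 1 := (Finset.sum_le_sum fun i _ => le_abs_self (s i)).trans hs.2
  refine ⟨Fin.cases (sub_nonneg.2 hsum) fun i => (hs.1 i).1, ?_⟩
  simp [barycentric, Fin.sum_univ_succ]

theorem barycentric_pos {d : ℕ} {s : Fin d → ℝ} (hs : s ∈ SdInt d) (i : Fin (d + 1)) :
    0 < barycentric s i := by
  have hsum : ∑ i, s i < 1 := (Finset.sum_le_sum fun i _ => le_abs_self (s i)).trans_lt hs.2
  exact Fin.cases (sub_pos.2 hsum) (fun i => (hs.1 i).1) i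

theorem SdInt_subset_Sd (d : ℕ) : SdInt d ⊆ Sd d :=
  fun _ hs => ⟨fun i => Set.Ioo_subset_Icc_self (hs.1 i), hs.2.le⟩

theorem kappa_eq_Gamma_mul_prod (d : ℕ) (s : Fin d → ℝ) (b : ℝ) (x : Fin d → ℝ) :
    kappa d s b x = Gamma (b⁻¹ + Fintype.card (Fin (d + 1))) *
      ∏ i, barycentric x i ^ (b⁻¹ * barycentric s i) / Gamma (b⁻¹ * barycentric s i + 1) := by
  have htotal : ∑ i, (s i / b + 1) + ((1 - ∑ i, s i) / b + 1) =
      b⁻¹ + Fintype.card (Fin (d + 1)) := by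
    rw [Finset.sum_add_distrib, ← Finset.sum_div, Fintype.card_fin]
    simp only [Finset.sum_const, Finset.card_univ, Fintype.card_fin, nsmul_eq_mul]
    push_cast
    ring
  rw [kappa, dirK, htotal]
  simp only [Fin.prod_univ_succ, barycentric, Fin.cons_zero, Fin.cons_succ,
    add_sub_cancel_right, Finset.prod_div_distrib, div_eq_mul_inv _ b, mul_comm _ b⁻¹]
  ring

theorem kappa_nonneg {d : ℕ} {s x : Fin d → ℝ} (hs : s ∈ Sd d) {b : ℝ} (hb : 0 ≤ b)
    (hx : x ∈ Sd d) : 0 ≤ kappa d s b x := by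
  rw [kappa_eq_Gamma_mul_prod]
  exact mul_nonneg (Gamma_nonneg_of_nonneg (by positivity))
    (Finset.prod_nonneg fun i _ => rpow_div_Gamma_add_one_nonneg
      (mul_nonneg (inv_nonneg.2 hb) ((barycentric_mem_stdSimplex hs).1 i))
      ((barycentric_mem_stdSimplex hx).1 i))

theorem exists_kappa_le_mul_rpow {d : ℕ} {s : Fin d → ℝ} (hs : s ∈ SdInt d) (B : ℝ) :
    ∃ C, ∀ b ∈ Set.Ioc 0 B, ∀ x ∈ Sd d, kappa d s b x ≤ C * b ^ (-(d : ℝ) / 2) := by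
  refine ⟨exp (2 + (d + 1) / 2 + (d + 1) ^ 2 * B) * ∏ i, 1 / √(barycentric s i),
    fun b ⟨hb, hbB⟩ x hx => ?_⟩
  rw [kappa_eq_Gamma_mul_prod]
  refine (Gamma_mul_prod_rpow_div_Gamma_le (inv_pos.2 hb)
    (barycentric_mem_stdSimplex (SdInt_subset_Sd d hs)) (barycentric_pos hs)
    (barycentric_mem_stdSimplex hx)).trans ?_
  rw [Fintype.card_fin, Nat.cast_add_one, add_sub_cancel_right, div_inv_eq_mul, inv_rpow hb.le,
    ← rpow_neg hb.le, ← neg_div]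
  gcongr

theorem measurable_kappa (d : ℕ) (s : Fin d → ℝ) (b : ℝ) : Measurable (kappa d s b) := by
  unfold kappa dirK
  fun_prop

end DirichletKernel

section Covariance

variable {Ω : Type*} [MeasurableSpace Ω]

theorem abs_integral_sub_integral_le_of_superlevel {μ₁ μ₂ : Measure Ω} [IsFiniteMeasure μ₁]
    [IsFiniteMeasure μ₂] {g : Ω → ℝ} (hg : Measurable g) {M a : ℝ} (hM : 0 ≤ M)
    (h₁ : ∀ᵐ ω ∂μ₁, g ω ∈ Set.Icc 0 M) (h₂ : ∀ᵐ ω ∂μ₂, g ω ∈ Set.Icc 0 M)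
    (h : ∀ t, |μ₁.real {ω | t ≤ g ω} - μ₂.real {ω | t ≤ g ω}| ≤ a) :
    |∫ ω, g ω ∂μ₁ - ∫ ω, g ω ∂μ₂| ≤ M * a := by
  have hlayer : ∀ (μ : Measure Ω) [IsFiniteMeasure μ], (∀ᵐ ω ∂μ, g ω ∈ Set.Icc 0 M) →
      ∫ ω, g ω ∂μ = ∫ t in Set.Ioc 0 M, μ.real {ω | t ≤ g ω} := fun μ _ hμ =>
    (Integrable.of_mem_Icc 0 M hg.aemeasurable hμ).integral_eq_integral_Ioc_meas_le
      (hμ.mono fun _ hω => hω.1) (hμ.mono fun _ hω => hω.2)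
  have htail : ∀ (μ : Measure Ω) [IsFiniteMeasure μ],
      IntegrableOn (fun t => μ.real {ω | t ≤ g ω}) (Set.Ioc 0 M) := by
    intro μ _
    have hanti : Antitone fun t : ℝ => μ.real {ω | t ≤ g ω} := fun t u htu =>
      measureReal_mono fun ω (hω : u ≤ g ω) => htu.trans hω
    exact ((hanti.antitoneOn _).integrableOn_isCompact isCompact_Icc).mono_set
      Set.Ioc_subset_Icc_self
  calc |∫ ω, g ω ∂μ₁ - ∫ ω, g ω ∂μ₂|
      = ‖∫ t in Set.Ioc 0 M, (μ₁.real {ω | t ≤ g ω} - μ₂.real {ω | t ≤ g ω})‖ := by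
        rw [hlayer μ₁ h₁, hlayer μ₂ h₂, integral_sub (htail μ₁) (htail μ₂), norm_eq_abs]
    _ ≤ a * volume.real (Set.Ioc 0 M) :=
        norm_setIntegral_le_of_norm_le_const (by simp) fun t _ => h t
    _ = M * a := by
        rw [volume_real_Ioc_of_le hM, sub_zero, mul_comm]

variable {P : Measure Ω} [IsProbabilityMeasure P]

theorem abs_setIntegral_sub_le_of_superlevel {Y : Ω → ℝ} (hY : Measurable Y) {M a : ℝ}
    (hYM : ∀ᵐ ω ∂P, Y ω ∈ Set.Icc 0 M) {S : Set Ω}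
    (h : ∀ t, |P.real ({ω | t ≤ Y ω} ∩ S) - P.real {ω | t ≤ Y ω} * P.real S| ≤ a) :
    |∫ ω in S, Y ω ∂P - P.real S * ∫ ω, Y ω ∂P| ≤ M * a := by
  obtain ⟨ω₀, hω₀⟩ := hYM.exists
  have : IsFiniteMeasure (P S • P) := P.smul_finite (measure_ne_top P S)
  have hdiff := abs_integral_sub_integral_le_of_superlevel (μ₁ := P.restrict S) (μ₂ := P S • P)
    hY (hω₀.1.trans hω₀.2) (ae_restrict_of_ae hYM) (Measure.ae_smul_measure hYM _) (a := a) ?_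
  · rwa [integral_smul_measure, smul_eq_mul] at hdiff
  · intro t
    rw [measureReal_restrict_apply (measurableSet_le measurable_const hY),
      measureReal_ennreal_smul_apply, mul_comm]
    exact h t

-- Integrating out one variable at a time: first `Y` against `P` on a superlevel set of `Z`,
-- then `Z` against the measure with density `Y`.
theorem abs_covariance_le_of_superlevel {Y Z : Ω → ℝ} (hY : Measurable Y) (hZ : Measurable Z)
    {M M' a : ℝ} (hYM : ∀ᵐ ω ∂P, Y ω ∈ Set.Icc 0 M) (hZM : ∀ᵐ ω ∂P, Z ω ∈ Set.Icc 0 M')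
    (h : ∀ t u, |P.real ({ω | t ≤ Y ω} ∩ {ω | u ≤ Z ω}) -
      P.real {ω | t ≤ Y ω} * P.real {ω | u ≤ Z ω}| ≤ a) :
    |cov[Y, Z; P]| ≤ M * M' * a := by
  obtain ⟨ω₀, hω₀⟩ := hZM.exists
  have hY_nonneg : 0 ≤ᵐ[P] Y := hYM.mono fun _ hω => hω.1
  set ν₁ : Measure Ω := P.withDensity fun ω => ENNReal.ofReal (Y ω) with hν₁
  set ν₂ : Measure Ω := ENNReal.ofReal (∫ ω, Y ω ∂P) • P with hν₂
  have : IsFiniteMeasure ν₁ :=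
    isFiniteMeasure_withDensity_ofReal (Integrable.of_mem_Icc 0 M hY.aemeasurable hYM).2
  have : IsFiniteMeasure ν₂ := P.smul_finite ENNReal.ofReal_ne_top
  have hmean : (ENNReal.ofReal (∫ ω, Y ω ∂P)).toReal = ∫ ω, Y ω ∂P :=
    ENNReal.toReal_ofReal (integral_nonneg_of_ae hY_nonneg)
  have hν₁_real : ∀ u, ν₁.real {ω | u ≤ Z ω} = ∫ ω in {ω | u ≤ Z ω}, Y ω ∂P := fun u => by
    rw [measureReal_def, withDensity_apply _ (measurableSet_le measurable_const hZ),
      integral_eq_lintegral_of_nonneg_ae (ae_restrict_of_ae hY_nonneg) hY.aestronglyMeasurable]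
  have hν₁_integral : ∫ ω, Z ω ∂ν₁ = ∫ ω, Y ω * Z ω ∂P := by
    rw [hν₁, integral_withDensity_eq_integral_toReal_smul (by fun_prop) (by simp)]
    exact integral_congr_ae (hY_nonneg.mono fun ω hω => by
      simp only [ENNReal.toReal_ofReal (show 0 ≤ Y ω from hω), smul_eq_mul])
  have hdiff := abs_integral_sub_integral_le_of_superlevel (μ₁ := ν₁) (μ₂ := ν₂) hZ
    (hω₀.1.trans hω₀.2) ((withDensity_absolutelyContinuous _ _).ae_le hZM)
    (Measure.ae_smul_measure hZM _) (a := M * a) fun u => by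
      rw [hν₁_real, hν₂, measureReal_ennreal_smul_apply, hmean, mul_comm (∫ ω, Y ω ∂P)]
      exact abs_setIntegral_sub_le_of_superlevel hY hYM fun t => h t u
  rw [hν₁_integral, hν₂, integral_smul_measure, hmean, smul_eq_mul] at hdiff
  rw [covariance_eq_sub (memLp_of_bounded hYM hY.aestronglyMeasurable 2)
    (memLp_of_bounded hZM hZ.aestronglyMeasurable 2), mul_comm M M', mul_assoc]
  exact hdiff

end Covariance

section Mixing

variable {Ω : Type*} {d : ℕ} {X : ℕ → Ω → (Fin d → ℝ)}

/-- The σ-algebra `σ(X_i : i ∈ I)` generated by the variables with index in `I`. It is an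
abbreviation for the supremum that appears in `alphaMix`, where `I` is the past `{1, …, k}` or the
future `{k + m, …}`. -/
abbrev sigmaAlgebraOf (X : ℕ → Ω → (Fin d → ℝ)) (I : Set ℕ) : MeasurableSpace Ω :=
  ⨆ i ∈ I, MeasurableSpace.comap (X i) inferInstance

theorem measurable_sigmaAlgebraOf {I : Set ℕ} {i : ℕ} (hi : i ∈ I) :
    Measurable[sigmaAlgebraOf X I] (X i) :=
  measurable_iff_comap_le.2 (le_iSup₂_of_le i hi le_rfl)

variable [MeasurableSpace Ω]

theorem sigmaAlgebraOf_le (hX : ∀ i, Measurable (X i)) (I : Set ℕ) :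
    sigmaAlgebraOf X I ≤ ‹MeasurableSpace Ω› :=
  iSup₂_le fun i _ => (hX i).comap_le

variable {P : Measure Ω}

theorem integral_sum_Xi_mul_sum_Xi {s : Fin d → ℝ} {b : ℝ}
    (hint : ∀ i, Integrable (fun ω => kappa d s b (X i ω)) P) (I J : Finset ℕ) :
    ∫ ω, (∑ i ∈ I, Xi P X s b i ω) * (∑ j ∈ J, Xi P X s b j ω) ∂P =
      cov[fun ω => ∑ i ∈ I, kappa d s b (X i ω), fun ω => ∑ j ∈ J, kappa d s b (X j ω); P] := by
  simp only [covariance, integral_finsetSum _ fun i _ => hint i, ← Finset.sum_sub_distrib, Xi]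

variable [IsProbabilityMeasure P]

theorem abs_measureReal_inter_sub_le_alphaMix {k m : ℕ} (hk : 1 ≤ k) {A B : Set Ω}
    (hA : MeasurableSet[sigmaAlgebraOf X (Set.Icc 1 k)] A)
    (hB : MeasurableSet[sigmaAlgebraOf X (Set.Ici (k + m))] B) :
    |P.real (A ∩ B) - P.real A * P.real B| ≤ alphaMix P X m := by
  refine le_csSup ⟨1, ?_⟩ ⟨k, hk, A, B, hA, hB, rfl⟩
  rintro r ⟨-, -, A, B, -, -, rfl⟩
  exact abs_sub_le_of_nonneg_of_le measureReal_nonneg measureReal_le_one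
    (mul_nonneg measureReal_nonneg measureReal_nonneg)
    (mul_le_one₀ measureReal_le_one measureReal_nonneg measureReal_le_one)

theorem abs_covariance_le_mul_alphaMix (hX : ∀ i, Measurable (X i)) {k m : ℕ} (hk : 1 ≤ k)
    {Y Z : Ω → ℝ} (hY : Measurable[sigmaAlgebraOf X (Set.Icc 1 k)] Y)
    (hZ : Measurable[sigmaAlgebraOf X (Set.Ici (k + m))] Z) {M M' : ℝ}
    (hYM : ∀ᵐ ω ∂P, Y ω ∈ Set.Icc 0 M) (hZM : ∀ᵐ ω ∂P, Z ω ∈ Set.Icc 0 M') :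
    |cov[Y, Z; P]| ≤ M * M' * alphaMix P X m :=
  abs_covariance_le_of_superlevel (hY.mono (sigmaAlgebraOf_le hX _) le_rfl)
    (hZ.mono (sigmaAlgebraOf_le hX _) le_rfl) hYM hZM fun _ _ =>
      abs_measureReal_inter_sub_le_alphaMix hk (hY measurableSet_Ici) (hZ measurableSet_Ici)

theorem abs_covariance_sum_comp_le (hX : ∀ i, Measurable (X i)) {g : (Fin d → ℝ) → ℝ}
    (hg : Measurable g) {M : ℝ} (hgM : ∀ i, ∀ᵐ ω ∂P, g (X i ω) ∈ Set.Icc 0 M) {k m : ℕ}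
    (hk : 1 ≤ k) {I J : Finset ℕ} (hI : ∀ i ∈ I, i ∈ Set.Icc 1 k)
    (hJ : ∀ j ∈ J, j ∈ Set.Ici (k + m)) :
    |cov[fun ω => ∑ i ∈ I, g (X i ω), fun ω => ∑ j ∈ J, g (X j ω); P]| ≤
      I.card * M * (J.card * M) * alphaMix P X m := by
  have hmeas : ∀ {L : Finset ℕ} {S : Set ℕ}, (∀ i ∈ L, i ∈ S) →
      Measurable[sigmaAlgebraOf X S] fun ω => ∑ i ∈ L, g (X i ω) := fun hL =>
    Finset.measurable_fun_sum _ fun i hi => hg.comp (measurable_sigmaAlgebraOf (hL i hi))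
  have hbound : ∀ L : Finset ℕ, ∀ᵐ ω ∂P, ∑ i ∈ L, g (X i ω) ∈ Set.Icc 0 (L.card * M) := by
    intro L
    filter_upwards [ae_all_iff.2 hgM] with ω hω
    refine ⟨Finset.sum_nonneg fun i _ => (hω i).1, ?_⟩
    simpa using Finset.sum_le_card_nsmul L _ M fun i _ => (hω i).2
  exact abs_covariance_le_mul_alphaMix hX hk (hmeas hI) (hmeas hJ) (hbound I) (hbound J)

end Mixing

section Blocks

theorem card_smallBlock (p q : ℕ) {j : ℕ} (hj : 1 ≤ j) : (smallBlock p q j).card = q := by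
  obtain ⟨l, rfl⟩ := Nat.exists_eq_add_of_le' hj
  rw [smallBlock, Nat.card_Icc, Nat.add_sub_cancel, Nat.succ_mul]
  omega

theorem mem_Icc_of_mem_smallBlock {p q j l : ℕ} (hl : l ∈ smallBlock p q j) :
    l ∈ Set.Icc 1 (j * (p + q)) := by
  rw [smallBlock, Finset.mem_Icc] at hl
  exact ⟨by omega, hl.2⟩

theorem mem_Ici_of_mem_smallBlock {p q i j l : ℕ} (hij : i < j) (hl : l ∈ smallBlock p q j) :
    l ∈ Set.Ici (i * (p + q) + (j - i) * p) := by
  obtain ⟨r, rfl⟩ := Nat.exists_eq_add_of_lt hij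
  rw [smallBlock, Finset.mem_Icc, Nat.add_sub_cancel] at hl
  rw [show i + r + 1 - i = r + 1 by omega]
  refine le_trans ?_ hl.1
  nlinarith [Nat.zero_le (r * q)]

variable {Ω : Type*} [MeasurableSpace Ω] {P : Measure Ω} [IsProbabilityMeasure P] {d : ℕ}
  {X : ℕ → Ω → (Fin d → ℝ)} {s : Fin d → ℝ} {b M : ℝ}

theorem abs_integral_smallBlock_mul_le (hX : ∀ i, Measurable (X i))
    (hκ : ∀ i, ∀ᵐ ω ∂P, kappa d s b (X i ω) ∈ Set.Icc 0 M) {p : ℕ} (hp : 0 < p) (q : ℕ) {i j : ℕ}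
    (hi : 1 ≤ i) (hij : i < j) :
    |∫ ω, (∑ i' ∈ smallBlock p q i, Xi P X s b i' ω) *
        (∑ j' ∈ smallBlock p q j, Xi P X s b j' ω) ∂P| ≤
      (q * M) ^ 2 * alphaMix P X ((j - i) * p) := by
  have hmeas := measurable_kappa d s b
  rw [integral_sum_Xi_mul_sum_Xi fun l =>
    Integrable.of_mem_Icc 0 M (hmeas.comp (hX l)).aemeasurable (hκ l)]
  refine (abs_covariance_sum_comp_le hX hmeas hκ (Nat.mul_pos hi (Nat.add_pos_left hp q))
    (fun _ => mem_Icc_of_mem_smallBlock) (fun _ => mem_Ici_of_mem_smallBlock hij)).trans_eq ?_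
  rw [card_smallBlock p q hi, card_smallBlock p q (hi.trans hij.le), sq]

theorem sum_Ico_sub_le_tsum {φ : ℕ → ℝ} (hφ : Summable φ) (hφ_nonneg : ∀ l, 0 ≤ φ l) (j : ℕ) :
    ∑ i ∈ Finset.Ico 1 j, φ (j - i) ≤ ∑' l, φ l := by
  rw [Finset.sum_Ico_reflect φ 1 (Nat.le_succ j)]
  exact hφ.sum_le_tsum _ fun l _ => hφ_nonneg l

theorem sum_abs_integral_smallBlock_mul_le (hX : ∀ i, Measurable (X i))
    (hκ : ∀ i, ∀ᵐ ω ∂P, kappa d s b (X i ω) ∈ Set.Icc 0 M) {K ν : ℝ} (hK : 0 ≤ K) (hν : 1 < ν)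
    (hα : ∀ m : ℕ, 0 < m → alphaMix P X m ≤ K * (m : ℝ) ^ (-ν)) {p : ℕ} (hp : 0 < p) (q k : ℕ) :
    ∑ j ∈ Finset.Icc 1 k, ∑ i ∈ Finset.Ico 1 j,
        |∫ ω, (∑ i' ∈ smallBlock p q i, Xi P X s b i' ω) *
          (∑ j' ∈ smallBlock p q j, Xi P X s b j' ω) ∂P| ≤
      k * ((q * M) ^ 2 * (K * (p : ℝ) ^ (-ν)) * ∑' l : ℕ, (l : ℝ) ^ (-ν)) := by
  have hpair : ∀ j, ∀ i ∈ Finset.Ico 1 j,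
      |∫ ω, (∑ i' ∈ smallBlock p q i, Xi P X s b i' ω) *
          (∑ j' ∈ smallBlock p q j, Xi P X s b j' ω) ∂P| ≤
        (q * M) ^ 2 * (K * (p : ℝ) ^ (-ν)) * ((j - i : ℕ) : ℝ) ^ (-ν) := by
    intro j i hi
    obtain ⟨hi, hij⟩ := Finset.mem_Ico.1 hi
    have hmix := hα ((j - i) * p) (Nat.mul_pos (Nat.sub_pos_of_lt hij) hp)
    rw [Nat.cast_mul, mul_rpow (Nat.cast_nonneg _) (Nat.cast_nonneg _), mul_comm (_ ^ _),
      ← mul_assoc] at hmix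
    rw [mul_assoc]
    exact (abs_integral_smallBlock_mul_le hX hκ hp q hi hij).trans
      (mul_le_mul_of_nonneg_left hmix (sq_nonneg _))
  have hsummable : Summable fun l : ℕ => (l : ℝ) ^ (-ν) := summable_nat_rpow.2 (by linarith)
  have hinner : ∀ j ∈ Finset.Icc 1 k, ∑ i ∈ Finset.Ico 1 j,
      |∫ ω, (∑ i' ∈ smallBlock p q i, Xi P X s b i' ω) *
          (∑ j' ∈ smallBlock p q j, Xi P X s b j' ω) ∂P| ≤
        (q * M) ^ 2 * (K * (p : ℝ) ^ (-ν)) * ∑' l : ℕ, (l : ℝ) ^ (-ν) := fun j _ => by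
    refine (Finset.sum_le_sum (hpair j)).trans ?_
    rw [← Finset.mul_sum]
    exact mul_le_mul_of_nonneg_left (sum_Ico_sub_le_tsum hsummable
      (fun l => rpow_nonneg (Nat.cast_nonneg l) _) j) (by positivity)
  simpa only [Nat.card_Icc, Nat.add_sub_cancel, nsmul_eq_mul] using
    Finset.sum_le_card_nsmul _ _ _ hinner

end Blocks

section Asymptotics

theorem rpow_neg_le_mul_rpow_neg {x y c ν : ℝ} (hx : 0 < x) (hy : 0 < y) (hyx : y ≤ c * x)
    (hν : 0 ≤ ν) : x ^ (-ν) ≤ c ^ ν * y ^ (-ν) := by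
  have hc : 0 ≤ c := (pos_of_mul_pos_left (hy.trans_le hyx) hx.le).le
  rw [rpow_neg hx.le, rpow_neg hy.le, ← div_eq_mul_inv, le_div_iff₀ (by positivity),
    inv_mul_le_iff₀ (by positivity), mul_comm, ← mul_rpow hc hx.le]
  exact rpow_le_rpow hy.le hyx hν

theorem isBigO_of_tendsto_div_add_nhds_one {p q : ℕ → ℕ}
    (h : Tendsto (fun n => (p n : ℝ) / ((p n : ℝ) + (q n : ℝ))) atTop (𝓝 1)) :
    (fun n => (q n : ℝ)) =O[atTop] fun n => (p n : ℝ) := by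
  refine IsBigO.of_bound 1 ?_
  filter_upwards [h.eventually (lt_mem_nhds (show (1 / 2 : ℝ) < 1 by norm_num))] with n hn
  have hpos : (0 : ℝ) < p n + q n := by
    by_contra hle
    rw [le_antisymm (not_lt.1 hle) (by positivity), div_zero] at hn
    norm_num at hn
  rw [lt_div_iff₀ hpos] at hn
  rw [norm_natCast, norm_natCast]
  linarith

theorem small_block_cross_cov_sum_general {Ω : Type*} [MeasurableSpace Ω] (P : Measure Ω)
    [IsProbabilityMeasure P] (d : ℕ) (X : ℕ → Ω → (Fin d → ℝ)) (hmeas : ∀ i, Measurable (X i))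
    (hval : ∀ i, ∀ᵐ ω ∂P, X i ω ∈ Sd d) (ν : ℝ) (hν : 1 < ν)
    (hmix : (fun m : ℕ => alphaMix P X m) =O[atTop] fun m : ℕ => (m : ℝ) ^ (-ν))
    (s : Fin d → ℝ) (hs : s ∈ SdInt d) (b : ℕ → ℝ) (B : ℝ)
    (hb : ∀ᶠ n in atTop, b n ∈ Set.Ioc 0 B) (pn qn : ℕ → ℕ) (hpn : ∀ᶠ n in atTop, 0 < pn n)
    (hqp : (fun n => (qn n : ℝ)) =O[atTop] fun n => (pn n : ℝ)) :
    (fun n : ℕ =>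
        ∑ j ∈ Finset.Icc 1 (n / (pn n + qn n)), ∑ i ∈ Finset.Ico 1 j,
          |∫ ω, (∑ i' ∈ smallBlock (pn n) (qn n) i, Xi P X s (b n) i' ω) *
              (∑ j' ∈ smallBlock (pn n) (qn n) j, Xi P X s (b n) j' ω) ∂P|)
      =O[atTop]
      (fun n : ℕ => ((n / (pn n + qn n) : ℕ) : ℝ) *
        ((qn n : ℝ) * (b n) ^ (-(d : ℝ) / 2)) ^ 2 / ((pn n : ℝ) + (qn n : ℝ)) ^ ν) := by
  obtain ⟨C, hC⟩ := exists_kappa_le_mul_rpow hs B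
  obtain ⟨K, hK, hαK⟩ := bound_of_isBigO_nat_atTop hmix
  obtain ⟨c, hqc⟩ := hqp.bound
  have hα : ∀ m : ℕ, 0 < m → alphaMix P X m ≤ K * (m : ℝ) ^ (-ν) := fun m hm => by
    have hpos : 0 < (m : ℝ) ^ (-ν) := by positivity
    simpa only [norm_of_nonneg hpos.le] using (le_norm_self _).trans (hαK hpos.ne')
  refine IsBigO.of_bound (C ^ 2 * K * (1 + c) ^ ν * ∑' l : ℕ, (l : ℝ) ^ (-ν)) ?_
  filter_upwards [hb, hpn, hqc] with n hbn hp hq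
  have hp' : (0 : ℝ) < pn n := by exact_mod_cast hp
  have hκ : ∀ i, ∀ᵐ ω ∂P, kappa d s (b n) (X i ω) ∈ Set.Icc 0 (C * b n ^ (-(d : ℝ) / 2)) :=
    fun i => (hval i).mono fun ω hω =>
      ⟨kappa_nonneg (SdInt_subset_Sd d hs) hbn.1.le hω, hC _ hbn _ hω⟩
  have hlag : (pn n : ℝ) ^ (-ν) ≤ (1 + c) ^ ν * ((pn n : ℝ) + qn n) ^ (-ν) := by
    rw [norm_natCast, norm_natCast] at hq
    exact rpow_neg_le_mul_rpow_neg hp' (by positivity) (by linarith) (by linarith)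
  rw [norm_of_nonneg (by positivity), norm_of_nonneg (by positivity)]
  calc _ ≤ _ := sum_abs_integral_smallBlock_mul_le hmeas hκ hK.le hν hα hp (qn n) _
    _ ≤ ((n / (pn n + qn n) : ℕ) : ℝ) * ((qn n * (C * b n ^ (-(d : ℝ) / 2))) ^ 2 *
        (K * ((1 + c) ^ ν * ((pn n : ℝ) + qn n) ^ (-ν))) * ∑' l : ℕ, (l : ℝ) ^ (-ν)) := by
      gcongr
    _ = _ := by
      rw [rpow_neg (by positivity : (0 : ℝ) ≤ pn n + qn n)]
      ring

end Asymptotics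

/-- Cross-covariance sum of small-block sums `V_j`. -/
theorem small_block_cross_cov_sum {Ω : Type*} [MeasurableSpace Ω]
    (P : Measure Ω) [IsProbabilityMeasure P] (d : ℕ) (hd : 1 ≤ d)
    (X : ℕ → Ω → (Fin d → ℝ)) (hmeas : ∀ i, Measurable (X i))
    (hval : ∀ i ω, X i ω ∈ Sd d)
    (hstat : IsStrictlyStationary P X)
    (f : (Fin d → ℝ) → ℝ)
    (hlaw : ∀ i : ℕ, 1 ≤ i →
      Measure.map (X i) P = volume.withDensity fun x => ENNReal.ofReal (f x))
    (hsupp : ∀ x, x ∉ Sd d → f x = 0)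
    (ν : ℝ) (hν : 1 < ν)
    (hA3 : (fun m : ℕ => alphaMix P X m) =O[atTop] fun m : ℕ => (m : ℝ) ^ (-ν))
    (s : Fin d → ℝ) (hs : s ∈ SdInt d)
    (b : ℕ → ℝ) (hbpos : ∀ n, 0 < b n) (hb0 : Tendsto b atTop (𝓝 0))
    (pn qn : ℕ → ℕ) (hpn : Tendsto pn atTop atTop) (hqn : Tendsto qn atTop atTop)
    (hpq1 : Tendsto (fun n : ℕ => (pn n : ℝ) / ((pn n : ℝ) + (qn n : ℝ))) atTop (𝓝 1)) :
    (fun n : ℕ =>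
        ∑ j ∈ Finset.Icc 1 (n / (pn n + qn n)), ∑ i ∈ Finset.Ico 1 j,
          |∫ ω, (∑ i' ∈ smallBlock (pn n) (qn n) i, Xi P X s (b n) i' ω) *
              (∑ j' ∈ smallBlock (pn n) (qn n) j, Xi P X s (b n) j' ω) ∂P|)
      =O[atTop]
      (fun n : ℕ => ((n / (pn n + qn n) : ℕ) : ℝ) *
        ((qn n : ℝ) * (b n) ^ (-(d : ℝ) / 2)) ^ 2 / ((pn n : ℝ) + (qn n : ℝ)) ^ ν) :=
  small_block_cross_cov_sum_general P d X hmeas (fun i => ae_of_all P (hval i)) ν hν hA3 s hs b 1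
    ((hb0.eventually_le_const one_pos).mono fun n hn => ⟨hbpos n, hn⟩) pn qn
    (hpn.eventually_gt_atTop 0) (isBigO_of_tendsto_div_add_nhds_one hpq1)
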